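/- Let R be the t×n Hankel determinantal ring over a field F (2 ≤ t ≤ n), and Δ the image in R of the determinant of the top-left (t-1)×(t-1) submatrix of the Hankel matrix. Then the localization R_Δ equals the localization at Δ of the subring F[x_1,...,x_{2t-2}], and the images of x_1,...,x_{2t-2} in R are algebraically independent over F. -/

import Mathlib

set_option synthInstance.maxHeartbeats 1000000
set_option maxHeartbeats 1000000

open MvPolynomial Matrix

/-! The minor of `H` on the columns `1, …, t - 1, j` is an affine function of its corner entry
`x_{t + j - 1}` with slope `Δ`. All these minors vanish in `R`, so once `Δ` is invertible they
express `x_{2t-1}, x_{2t}, …` successively through `x_1, …, x_{2t-2}` and `Δ⁻¹`.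

For the independence, invert the `(t - 1) × (t - 1)` Hankel determinant in a polynomial ring.
Cramer's rule then gives a linear recurrence of order `t - 1` satisfied by the first `2t - 2`
variables. Continuing them by this recurrence makes the rows of the Hankel matrix dependent, so
its maximal minors vanish and `R` maps to the localized polynomial ring, where the images of
`x_1, …, x_{2t-2}` are variables. -/

theorem det_mem {B σ ι : Type*} [CommRing B] [SetLike σ B] [SubringClass σ B] [Fintype ι]
    [DecidableEq ι] {A : σ} {M : Matrix ι ι B} (hM : ∀ i j, M i j ∈ A) : M.det ∈ A := by
  rw [Matrix.det_apply']
  exact sum_mem fun τ _ => mul_mem (intCast_mem A _) (prod_mem fun i _ => hM _ _)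

theorem corner_mem_of_det_mem {B σ : Type*} [CommRing B] [SetLike σ B] [SubringClass σ B] {A : σ}
    {m : ℕ} {M : Matrix (Fin (m + 1)) (Fin (m + 1)) B} (hdet : M.det ∈ A)
    (htop : ∀ i j, M (Fin.castSucc i) j ∈ A)
    (hlast : ∀ j, M (Fin.last m) (Fin.castSucc j) ∈ A) {d : B} (hd : d ∈ A)
    (hinv : d * (M.submatrix Fin.castSucc Fin.castSucc).det = 1) :
    M (Fin.last m) (Fin.last m) ∈ A := by
  rw [det_succ_row M (Fin.last m), Fin.sum_univ_castSucc] at hdet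
  simp only [Fin.succAbove_last, Even.neg_one_pow ⟨_, rfl⟩, one_mul] at hdet
  have hrest : ∑ j : Fin m, (-1) ^ ((Fin.last m : ℕ) + (j.castSucc : ℕ)) *
      M (Fin.last m) j.castSucc *
        (M.submatrix Fin.castSucc j.castSucc.succAbove).det ∈ A :=
    sum_mem fun j _ => mul_mem (mul_mem (pow_mem (neg_mem (one_mem A)) _) (hlast j))
      (det_mem fun _ _ => htop _ _)
  have hcorner := mul_mem hd ((add_mem_cancel_left hrest).1 hdet)
  rwa [mul_left_comm, hinv, mul_one] at hcorner

theorem subalgebra_eq_top_of_isLocalization_away {F R S : Type*} [CommSemiring F] [CommSemiring R]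
    [CommSemiring S] [Algebra F S] [Algebra R S] (r : R) [IsLocalization.Away r S]
    {A : Subalgebra F S} (hA : ∀ a, algebraMap R S a ∈ A)
    (hr : IsLocalization.Away.invSelf r ∈ A) : A = ⊤ := by
  refine eq_top_iff.2 fun y _ => ?_
  obtain ⟨k, a, ha⟩ := IsLocalization.Away.surj r y
  have hy : y = algebraMap R S a * IsLocalization.Away.invSelf r ^ k := by
    rw [← ha, mul_assoc, ← mul_pow, IsLocalization.Away.mul_invSelf, one_pow, mul_one]
  exact hy ▸ mul_mem (hA a) (pow_mem hr k)

theorem algebraicIndependent_mk_X {F S σ ι : Type*} [CommRing F] [CommRing S] [Algebra F S]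
    {I : Ideal (MvPolynomial σ F)} {z : σ → S} (hI : I ≤ RingHom.ker (aeval (R := F) z))
    {e : ι → σ} (hz : AlgebraicIndependent F (z ∘ e)) :
    AlgebraicIndependent F fun i => Ideal.Quotient.mk I (X (e i)) := by
  refine AlgebraicIndependent.of_comp (Ideal.Quotient.liftₐ I (aeval z) fun a ha => hI ha) ?_
  convert hz using 1
  ext i
  exact aeval_X z (e i)

/-- The columns `c 0, c 1, …` of the infinite Hankel matrix `(x_{i+j})`, cut off to a square
matrix. All indices are 0-based. -/
def hankelMatrix {R : Type*} {p : ℕ} (x : ℕ → R) (c : Fin p → ℕ) : Matrix (Fin p) (Fin p) R :=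
  of fun i j => x (i + c j)

theorem mem_of_hankel_minors_eq_zero {B σ : Type*} [CommRing B] [SetLike σ B] [SubringClass σ B]
    {A : σ} {m n : ℕ} {x : ℕ → B} (hinit : ∀ i < 2 * m, x i ∈ A)
    (hminor : ∀ g : Fin (m + 1) → Fin n, (hankelMatrix x fun j => g j).det = 0) {d : B}
    (hd : d ∈ A) (hinv : d * (hankelMatrix x (Fin.val : Fin m → ℕ)).det = 1) :
    ∀ k < n + m, x k ∈ A := by
  intro k
  induction k using Nat.strong_induction_on with
  | _ k ih =>
    intro hk
    obtain hkm | hkm := lt_or_ge k (2 * m)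
    · exact hinit k hkm
    let g : Fin (m + 1) → Fin n := Fin.snoc (Fin.castLE (by omega)) ⟨k - m, by omega⟩
    have hg (j : Fin m) : (g j.castSucc : ℕ) = j := by simp [g]
    have hg_last : (g (Fin.last m) : ℕ) = k - m := by simp [g]
    have hg_le (j : Fin (m + 1)) : (g j : ℕ) ≤ k - m := by
      induction j using Fin.lastCases with
      | last => exact hg_last.le
      | cast j => have := hg j; omega
    have hx_lt : ∀ i < k, x i ∈ A := fun i hi => ih i hi (by omega)
    suffices hankelMatrix x (fun j => (g j : ℕ)) (Fin.last m) (Fin.last m) ∈ A by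
      simpa [hankelMatrix, hg_last, show m + (k - m) = k by omega] using this
    refine corner_mem_of_det_mem (hminor g ▸ zero_mem A) (fun i j => hx_lt _ ?_)
      (fun j => hx_lt _ ?_) hd ?_
    · have := hg_le j
      simp only [Fin.val_castSucc]
      omega
    · simp only [hg, Fin.val_last]
      omega
    · convert hinv
      ext i j
      simp [hankelMatrix, hg]

theorem det_hankelMatrix_eq_zero_of_isSolution {S : Type*} [CommRing S] {E : LinearRecurrence S}
    {z : ℕ → S} (hz : E.IsSolution z) (c : Fin (E.order + 1) → ℕ) :
    (hankelMatrix z c).det = 0 := by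
  rw [← det_transpose]
  refine det_eq_zero_of_mulVec_eq_zero_of_mem_nonZeroDivisors
    (v := Fin.snoc (α := fun _ => S) E.coeffs (-1)) (i := Fin.last _) ?_ ?_
  · ext j
    have hrec := hz (c j)
    simp only [mulVec, dotProduct, transpose_apply, hankelMatrix, of_apply, Fin.sum_univ_castSucc,
      Fin.snoc_castSucc, Fin.snoc_last, Fin.val_castSucc, Fin.val_last, Pi.zero_apply]
    simp only [add_comm _ (c j), hrec, mul_comm, neg_one_mul, add_neg_cancel]
  · rw [Fin.snoc_last]
    exact isUnit_one.neg.mem_nonZeroDivisors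

theorem exists_isSolution_of_isUnit_det {S : Type*} [CommRing S] {m : ℕ} {y : ℕ → S}
    (hy : IsUnit (hankelMatrix y (Fin.val : Fin m → ℕ)).det) :
    ∃ (c : Fin m → S) (z : ℕ → S),
      (LinearRecurrence.mk m c).IsSolution z ∧ ∀ i < 2 * m, z i = y i := by
  let M := hankelMatrix y (Fin.val : Fin m → ℕ)
  let v : Fin m → S := fun i => y (i + m)
  let E : LinearRecurrence S := ⟨m, M⁻¹ *ᵥ v⟩
  have hcoeffs : M *ᵥ E.coeffs = v := by
    rw [mulVec_mulVec, mul_nonsing_inv _ hy, one_mulVec]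
  let z := E.mkSol fun i => y i
  have hz : E.IsSolution z := E.is_sol_mkSol _
  refine ⟨E.coeffs, z, hz, fun i => ?_⟩
  induction i using Nat.strong_induction_on with
  | _ i ih =>
    intro hi
    obtain him | hmi := lt_or_ge i m
    · exact E.mkSol_eq_init _ ⟨i, him⟩
    obtain ⟨l, rfl⟩ := Nat.exists_eq_add_of_le' hmi
    calc z (l + m) = ∑ j, E.coeffs j * z (l + j) := hz l
      _ = ∑ j, M ⟨l, by omega⟩ j * E.coeffs j :=
        Finset.sum_congr rfl fun j _ => by
          have hj : (j : ℕ) < m := j.2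
          rw [ih _ (by omega) (by omega), mul_comm]
          rfl
      _ = y (l + m) := congrFun hcoeffs ⟨l, by omega⟩

/- Shifting the antidiagonal variable `X_{m-1}` by `T` turns the determinant into a polynomial in
`T` which, after reversing the rows, is a characteristic polynomial, hence monic up to sign. -/
theorem det_hankelMatrix_X_mem_nonZeroDivisors (F : Type*) [CommRing F] (m : ℕ) :
    (hankelMatrix (X : ℕ → MvPolynomial ℕ F) (Fin.val : Fin m → ℕ)).det ∈
      nonZeroDivisors (MvPolynomial ℕ F) := by
  let M := hankelMatrix (X : ℕ → MvPolynomial ℕ F) (Fin.val : Fin m → ℕ)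
  let shift : MvPolynomial ℕ F →ₐ[F] Polynomial (MvPolynomial ℕ F) :=
    aeval fun i => Polynomial.C (X i) + if i + 1 = m then Polynomial.X else 0
  have hshift : Function.Injective shift := by
    refine Function.LeftInverse.injective (g := Polynomial.eval 0) fun p => ?_
    suffices ((Polynomial.aeval (0 : MvPolynomial ℕ F)).restrictScalars F).comp shift =
        AlgHom.id F _ from DFunLike.congr_fun this p
    ext i
    simp [shift, apply_ite]
  have hcharmatrix : (shift.mapMatrix M).submatrix Fin.revPerm id =
      charmatrix (-M.submatrix Fin.revPerm id) := by
    ext1 i j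
    have hij : m - (i + 1) + j + 1 = m ↔ i = j := by
      rw [Fin.ext_iff]
      omega
    simp [M, shift, hankelMatrix, charmatrix_apply, diagonal_apply, hij,
      add_comm (Polynomial.C _)]
  refine mem_nonZeroDivisors_of_injective hshift ?_
  have hmonic := (charpoly_monic (-M.submatrix Fin.revPerm id)).mem_nonZeroDivisors
  rw [charpoly, ← hcharmatrix, det_permute, mul_mem_nonZeroDivisors] at hmonic
  rw [AlgHom.map_det]
  exact hmonic.2

/-- The polynomial ring in countably many variables with the `m × m` Hankel determinant of its
variables inverted. It is where the generic solution of a linear recurrence of order `m` lives. -/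
abbrev HankelAway (F : Type*) [CommRing F] (m : ℕ) : Type _ :=
  Localization.Away (hankelMatrix (X : ℕ → MvPolynomial ℕ F) (Fin.val : Fin m → ℕ)).det

theorem exists_isSolution_algebraicIndependent (F : Type*) [CommRing F] (m : ℕ) :
    ∃ (c : Fin m → HankelAway F m) (z : ℕ → HankelAway F m),
      (LinearRecurrence.mk m c).IsSolution z ∧
        AlgebraicIndependent F fun i : Fin (2 * m) => z i := by
  let D := (hankelMatrix (X : ℕ → MvPolynomial ℕ F) (Fin.val : Fin m → ℕ)).det
  let ι := IsScalarTower.toAlgHom F (MvPolynomial ℕ F) (HankelAway F m)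
  have hι : Function.Injective ι := IsLocalization.injective _
    (Submonoid.powers_le.2 (det_hankelMatrix_X_mem_nonZeroDivisors F m))
  have hunit : IsUnit (hankelMatrix (ι ∘ X) (Fin.val : Fin m → ℕ)).det := by
    have hD : IsUnit (ι D) := IsLocalization.Away.algebraMap_isUnit D
    rwa [AlgHom.map_det] at hD
  obtain ⟨c, z, hz, hinit⟩ := exists_isSolution_of_isUnit_det hunit
  refine ⟨c, z, hz, ?_⟩
  have hX := (algebraicIndependent_X ℕ F).comp (Fin.val : Fin (2 * m) → ℕ) Fin.val_injective
  convert hX.map' hι using 1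
  ext1 i
  exact hinit i i.2

section HankelRing

/-- The `t × n` Hankel matrix of variables; the entry `X k` is the variable `x_{k+1}` of the
paper. -/
noncomputable def genericHankel (F : Type*) [CommRing F] (t n : ℕ) :
    Matrix (Fin t) (Fin n) (MvPolynomial (Fin (n + t - 1)) F) :=
  of fun a b => X ⟨a + b, by omega⟩

/-- The ideal `I_t(H)` of maximal minors of the `t × n` Hankel matrix. Repeated columns are allowed
in `g`; they contribute only zeros. -/
noncomputable def hankelIdeal (F : Type*) [CommRing F] (t n : ℕ) :
    Ideal (MvPolynomial (Fin (n + t - 1)) F) :=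
  Ideal.span (Set.range fun g : Fin t → Fin n => ((genericHankel F t n).submatrix id g).det)

/-- The `m × m` minor in the top left corner of the `(m + 1) × n` Hankel matrix, the `Δ` of the
paper for `t = m + 1`. -/
noncomputable def hankelDelta (F : Type*) [CommRing F] {m n : ℕ} (hmn : m ≤ n) :
    MvPolynomial (Fin (n + (m + 1) - 1)) F :=
  ((genericHankel F (m + 1) n).submatrix Fin.castSucc (Fin.castLE hmn)).det

variable {F : Type*} [CommRing F] {m n : ℕ}

theorem aeval_det_submatrix_genericHankel {B : Type*} [CommRing B] [Algebra F B] {t p : ℕ}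
    (x : ℕ → B) {r : Fin p → Fin t} (hr : ∀ i, (r i : ℕ) = i) (g : Fin p → Fin n) :
    aeval (x ∘ Fin.val) ((genericHankel F t n).submatrix r g).det =
      (hankelMatrix x fun j => g j).det := by
  rw [AlgHom.map_det]
  congr 1
  ext i j
  simp [genericHankel, hankelMatrix, hr]

theorem hankelIdeal_le_ker_aeval_iff {B : Type*} [CommRing B] [Algebra F B] {t : ℕ} (x : ℕ → B) :
    hankelIdeal F t n ≤ RingHom.ker (aeval (R := F) (x ∘ (Fin.val : Fin (n + t - 1) → ℕ))) ↔
      ∀ g : Fin t → Fin n, (hankelMatrix x fun j => g j).det = 0 := by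
  simp only [hankelIdeal, Ideal.span_le, Set.range_subset_iff, SetLike.mem_coe, RingHom.mem_ker,
    aeval_det_submatrix_genericHankel x (r := id) fun _ => rfl]

theorem algebraicIndependent_hankelIdeal_mk_X (hmn : m ≤ n) :
    AlgebraicIndependent F fun i : Fin (2 * m) =>
      Ideal.Quotient.mk (hankelIdeal F (m + 1) n) (X ⟨i, by omega⟩) := by
  obtain ⟨c, z, hz, hindep⟩ := exists_isSolution_algebraicIndependent F m
  have hker := (hankelIdeal_le_ker_aeval_iff (F := F) (n := n) z).2 fun g =>
    det_hankelMatrix_eq_zero_of_isSolution hz fun j => g j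
  exact algebraicIndependent_mk_X hker hindep

theorem exists_eq_aeval_comp_val {B : Type*} [CommSemiring B] [Algebra F B] {N : ℕ}
    (φ : MvPolynomial (Fin N) F →ₐ[F] B) : ∃ x : ℕ → B, φ = aeval (x ∘ Fin.val) := by
  refine ⟨Function.extend Fin.val (fun i => φ (X i)) 0, ?_⟩
  ext i
  rw [aeval_X, Function.comp_apply, Fin.val_injective.extend_apply]

theorem map_mem_of_hankelIdeal_le_ker {B : Type*} [CommRing B] [Algebra F B] {A : Subalgebra F B}
    {φ : MvPolynomial (Fin (n + (m + 1) - 1)) F →ₐ[F] B}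
    (hker : hankelIdeal F (m + 1) n ≤ RingHom.ker φ)
    (hinit : ∀ i : Fin (n + (m + 1) - 1), (i : ℕ) < 2 * m → φ (X i) ∈ A) (hmn : m ≤ n) {d : B}
    (hd : d ∈ A) (hinv : d * φ (hankelDelta F hmn) = 1)
    (p : MvPolynomial (Fin (n + (m + 1) - 1)) F) : φ p ∈ A := by
  obtain ⟨x, rfl⟩ := exists_eq_aeval_comp_val φ
  have hxA (i : ℕ) (hi : i < 2 * m) : x i ∈ A := by
    simpa using hinit ⟨i, by omega⟩ hi
  rw [hankelDelta, aeval_det_submatrix_genericHankel x (r := Fin.castSucc) fun _ => rfl] at hinv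
  have hx := mem_of_hankel_minors_eq_zero hxA ((hankelIdeal_le_ker_aeval_iff x).1 hker) hd hinv
  exact eval₂_mem (fun _ _ => A.algebraMap_mem _) fun i : Fin _ => hx i i.2

theorem adjoin_invSelf_hankelDelta_eq_top (hmn : m ≤ n)
    (Δ : MvPolynomial (Fin (n + (m + 1) - 1)) F ⧸ hankelIdeal F (m + 1) n)
    (hΔ : Δ = Ideal.Quotient.mk _ (hankelDelta F hmn)) :
    Algebra.adjoin F
      ({y : Localization.Away Δ | ∃ i : Fin (2 * m),
          y = algebraMap _ _ (Ideal.Quotient.mk (hankelIdeal F (m + 1) n) (X ⟨i, by omega⟩))} ∪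
        {IsLocalization.Away.invSelf (S := Localization.Away Δ) Δ}) = ⊤ := by
  set A : Subalgebra F (Localization.Away Δ) := Algebra.adjoin F _
  have hinvSelf : IsLocalization.Away.invSelf Δ ∈ A := Algebra.subset_adjoin (Or.inr rfl)
  let φ : MvPolynomial (Fin (n + (m + 1) - 1)) F →ₐ[F] Localization.Away Δ :=
    (IsScalarTower.toAlgHom F (MvPolynomial _ F ⧸ hankelIdeal F (m + 1) n) _).comp
      (Ideal.Quotient.mkₐ F _)
  have hφ (p) : φ p = algebraMap _ (Localization.Away Δ)
      (Ideal.Quotient.mk (hankelIdeal F (m + 1) n) p) := rfl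
  have hker : hankelIdeal F (m + 1) n ≤ RingHom.ker φ := fun a ha => by
    rw [RingHom.mem_ker, hφ, Ideal.Quotient.eq_zero_iff_mem.2 ha, map_zero]
  have hinit (i : Fin (n + (m + 1) - 1)) (hi : (i : ℕ) < 2 * m) : φ (X i) ∈ A :=
    Algebra.subset_adjoin (Or.inl ⟨⟨i, hi⟩, rfl⟩)
  have hinv : IsLocalization.Away.invSelf Δ * φ (hankelDelta F hmn) = 1 := by
    rw [hφ, ← hΔ, mul_comm, IsLocalization.Away.mul_invSelf]
  exact subalgebra_eq_top_of_isLocalization_away Δ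
    (Ideal.Quotient.mk_surjective.forall.2
      (map_mem_of_hankelIdeal_le_ker hker hinit hmn hinvSelf hinv)) hinvSelf

end HankelRing

theorem hankel_localization_delta_general (F : Type*) [CommRing F] (t n : ℕ) (ht : 1 ≤ t)
    (htn : t ≤ n + 1)
    (H : Matrix (Fin t) (Fin n) (MvPolynomial (Fin (n + t - 1)) F))
    (hH : ∀ a b, H a b = X ⟨(a : ℕ) + (b : ℕ), by omega⟩)
    (I : Ideal (MvPolynomial (Fin (n + t - 1)) F))
    (hI : I = Ideal.span (Set.range fun g : Fin t → Fin n => (H.submatrix id g).det))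
    (Δ : MvPolynomial (Fin (n + t - 1)) F ⧸ I)
    (hΔ : Δ = Ideal.Quotient.mk I
      ((H.submatrix (fun i : Fin (t - 1) => (⟨i, by omega⟩ : Fin t))
        (fun j : Fin (t - 1) => (⟨j, by omega⟩ : Fin n))).det)) :
    AlgebraicIndependent F (fun i : Fin (2 * t - 2) =>
      Ideal.Quotient.mk I (X (⟨i, by omega⟩ : Fin (n + t - 1)))) ∧
    Algebra.adjoin F
      ({y : Localization.Away Δ | ∃ i : Fin (2 * t - 2),
          y = algebraMap _ _ (Ideal.Quotient.mk I
            (X (⟨i, by omega⟩ : Fin (n + t - 1))))} ∪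
        {IsLocalization.Away.invSelf (S := Localization.Away Δ) Δ}) = ⊤ := by
  obtain ⟨m, rfl⟩ := Nat.exists_eq_add_of_le' ht
  obtain rfl : H = genericHankel F (m + 1) n := Matrix.ext hH
  subst hI
  have hmn : m ≤ n := Nat.le_of_succ_le_succ htn
  exact ⟨algebraicIndependent_hankelIdeal_mk_X hmn,
    adjoin_invSelf_hankelDelta_eq_top hmn Δ hΔ⟩

/-- In the `t×n` Hankel determinantal ring `R` the images of `x_1,...,x_{2t-2}` are
algebraically independent over `F`, and the localization `R_Δ` at
`Δ = [1 ... t-1 | 1 ... t-1]` coincides with the localization of `F[x_1,...,x_{2t-2}]` at `Δ`: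
i.e. `R_Δ` is generated as an `F`-algebra by the images of `x_1,...,x_{2t-2}` together with
`Δ⁻¹`. -/
theorem hankel_localization_delta (F : Type*) [Field F] (t n : ℕ) (ht : 2 ≤ t) (htn : t ≤ n)
    (H : Matrix (Fin t) (Fin n) (MvPolynomial (Fin (n + t - 1)) F))
    (hH : ∀ a b, H a b = X ⟨(a : ℕ) + (b : ℕ), by have := a.2; have := b.2; omega⟩)
    (I : Ideal (MvPolynomial (Fin (n + t - 1)) F))
    (hI : I = Ideal.span (Set.range fun g : Fin t → Fin n => (H.submatrix id g).det))
    (Δ : MvPolynomial (Fin (n + t - 1)) F ⧸ I)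
    (hΔ : Δ = Ideal.Quotient.mk I
      ((H.submatrix (fun i : Fin (t - 1) => (⟨i.1, by have := i.2; omega⟩ : Fin t))
        (fun j : Fin (t - 1) => (⟨j.1, by have := j.2; omega⟩ : Fin n))).det)) :
    AlgebraicIndependent F (fun i : Fin (2 * t - 2) =>
      Ideal.Quotient.mk I (X (⟨i.1, by have := i.2; omega⟩ : Fin (n + t - 1)))) ∧
    Algebra.adjoin F
      ({y : Localization.Away Δ | ∃ i : Fin (2 * t - 2),
          y = algebraMap _ _ (Ideal.Quotient.mk I
            (X (⟨i.1, by have := i.2; omega⟩ : Fin (n + t - 1))))} ∪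
        {IsLocalization.Away.invSelf (S := Localization.Away Δ) Δ}) = ⊤ := by
  exact hankel_localization_delta_general F t n (by omega) (by omega) H hH I hI Δ hΔ
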